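/- For every natural number n, dim_{F₂} HH_{n+4}(A(1), A(1)) = dim_{F₂} HH_n(A(1), A(1)) + 8; that is, the Hochschild homology of A(1) is periodic of period 4 up to a shift of 8 in dimension. -/

import Mathlib

open TensorProduct MulOpposite CategoryTheory

section Machinery

variable (k : Type) [CommRing k] (S : Type) [Ring S] [Algebra k S] (P : Set (S × S))

/-- The `k`-submodule of (the restriction of scalars of) an `S`-module `N` generated by all
differences `p.1 • n - p.2 • n` for pairs `p ∈ P` and `n ∈ N`. -/
noncomputable def relSub (N : ModuleCat S) :
    Submodule k ((ModuleCat.restrictScalars (algebraMap k S)).obj N) :=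
  Submodule.span k {x | ∃ p ∈ P, ∃ n : N, x = p.1 • n - p.2 • n}

/-- The "coinvariants"-type additive functor sending an `S`-module `N` to its quotient,
as a `k`-module, by the span of all elements `p.1 • n - p.2 • n` for `p ∈ P`, `n ∈ N`. -/
noncomputable def coinvFunctor : ModuleCat S ⥤ ModuleCat k where
  obj N := ModuleCat.of k (((ModuleCat.restrictScalars (algebraMap k S)).obj N) ⧸ relSub k S P N)
  map {N N'} f := ModuleCat.ofHom <| Submodule.mapQ (relSub k S P N) (relSub k S P N')
      ((ModuleCat.restrictScalars (algebraMap k S)).map f).hom (by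
    rw [relSub, Submodule.span_le]
    rintro x ⟨p, hp, n, rfl⟩
    have : ((ModuleCat.restrictScalars (algebraMap k S)).map f) (p.1 • n - p.2 • n)
        = p.1 • (f n) - p.2 • (f n) := by
      show f (p.1 • n - p.2 • n) = _
      rw [map_sub, f.hom.map_smul, f.hom.map_smul]
    change ((ModuleCat.restrictScalars (algebraMap k S)).map f) (p.1 • n - p.2 • n)
        ∈ relSub k S P N'
    exact Submodule.subset_span ⟨p, hp, f n, this⟩)
  map_id _ := ModuleCat.hom_ext <| Submodule.linearMap_qext _ (LinearMap.ext fun _ => rfl)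
  map_comp _ _ := ModuleCat.hom_ext <| Submodule.linearMap_qext _ (LinearMap.ext fun _ => rfl)

instance : (coinvFunctor k S P).Additive where
  map_add := ModuleCat.hom_ext <| Submodule.linearMap_qext _ (LinearMap.ext fun _ => rfl)

end Machinery

/-- Hochschild homology `HH_n(A, A)` of a `k`-algebra `A`: the `n`-th left derived functor
(that is, `Tor_n` over the enveloping algebra `A ⊗[k] Aᵐᵒᵖ`) of the coinvariants functor
`N ↦ N / span { a•n - n•a }` (which is naturally isomorphic to `A ⊗_{A ⊗[k] Aᵐᵒᵖ} -`),
evaluated at the `A`-bimodule `A` itself. -/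
noncomputable def HochschildHomology (k : Type) [CommRing k] (A : Type) [Ring A] [Algebra k A]
    (n : ℕ) : ModuleCat k :=
  letI : Module (A ⊗[k] Aᵐᵒᵖ) A := TensorProduct.Algebra.module
  ((coinvFunctor k (A ⊗[k] Aᵐᵒᵖ)
      {p | ∃ a : A, p = (a ⊗ₜ[k] (1 : Aᵐᵒᵖ), (1 : A) ⊗ₜ[k] op a)}).leftDerived n).obj
    (ModuleCat.of (A ⊗[k] Aᵐᵒᵖ) A)

/-- The relations defining `A(1)`: `Sq¹·Sq¹ = 0` and `Sq²·Sq² + Sq¹·Sq²·Sq¹ = 0`. -/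
inductive A1Rel : FreeAlgebra (ZMod 2) (Fin 2) → FreeAlgebra (ZMod 2) (Fin 2) → Prop
  | sq1 : A1Rel (FreeAlgebra.ι (ZMod 2) 0 * FreeAlgebra.ι (ZMod 2) 0) 0
  | sq2 : A1Rel (FreeAlgebra.ι (ZMod 2) 1 * FreeAlgebra.ι (ZMod 2) 1 +
      FreeAlgebra.ι (ZMod 2) 0 * FreeAlgebra.ι (ZMod 2) 1 * FreeAlgebra.ι (ZMod 2) 0) 0

/-- `A(1)`, the subalgebra of the mod 2 Steenrod algebra generated by `Sq¹` and `Sq²`, presented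
as the quotient of the free `F₂`-algebra on two generators `Sq1, Sq2` by the two-sided ideal
generated by `Sq1·Sq1` and `Sq2·Sq2 + Sq1·Sq2·Sq1`. -/
abbrev A1 : Type := RingQuot A1Rel

/-- The image of `Sq¹` in `A(1)`. -/
noncomputable def Sq1 : A1 := RingQuot.mkAlgHom (ZMod 2) A1Rel (FreeAlgebra.ι (ZMod 2) 0)

/-- The image of `Sq²` in `A(1)`. -/
noncomputable def Sq2 : A1 := RingQuot.mkAlgHom (ZMod 2) A1Rel (FreeAlgebra.ι (ZMod 2) 1)

/-- Milnor's element `Q₀ = Sq¹·Sq² + Sq²·Sq¹` in `A(1)`. -/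
noncomputable def Q0 : A1 := Sq1 * Sq2 + Sq2 * Sq1

namespace HA1

section Generic

/-- Valid column indices in total degree `n`. -/
def V (n m : ℕ) : Prop := m ≤ n ∧ (m % 4 = 0 ∨ m % 4 = 3 ∨ m = n)

instance (n m : ℕ) : Decidable (V n m) := by unfold V; infer_instance

/-- The index type of columns in total degree `n`. -/
abbrev J (n : ℕ) : Type := {m : ℕ // V n m}

instance (n : ℕ) : Finite (J n) :=
  Set.Finite.to_subtype ((Set.finite_Iic n).subset (fun _ hm => hm.1))

variable {T : Type} [Ring T] {N : Type} [AddCommGroup N] [Module T N]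

/-- Extension by zero. -/
def ex (n m : ℕ) : (J n → N) →ₗ[T] N where
  toFun f := if h : V n m then f ⟨m, h⟩ else 0
  map_add' f g := by split_ifs <;> simp
  map_smul' c f := by split_ifs <;> simp

lemma ex_of {n m : ℕ} (h : V n m) (f : J n → N) : ex (T := T) n m f = f ⟨m, h⟩ := dif_pos h
lemma ex_not {n m : ℕ} (h : ¬ V n m) (f : J n → N) : ex (T := T) n m f = 0 := dif_neg h

variable (X Y : N →ₗ[T] N)

/-- The differential. -/
def dd (n : ℕ) : (J (n + 1) → N) →ₗ[T] (J n → N) :=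
  LinearMap.pi fun j =>
    if j.1 % 4 = 0 then
      X ∘ₗ ex (n+1) j.1 + Y ∘ₗ ex (n+1) (j.1+1) + Y ∘ₗ X ∘ₗ ex (n+1) (j.1+2)
        + Y ∘ₗ X ∘ₗ Y ∘ₗ ex (n+1) (j.1+3)
    else if j.1 % 4 = 1 then Y ∘ₗ ex (n+1) (j.1+1)
    else if j.1 % 4 = 2 then Y ∘ₗ X ∘ₗ ex (n+1) (j.1+1)
    else X ∘ₗ ex (n+1) j.1 + Y ∘ₗ X ∘ₗ Y ∘ₗ ex (n+1) (j.1+1)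

variable {X Y}

lemma dd_0 {n m : ℕ} (h : V n m) (hm : m % 4 = 0) (f : J (n+1) → N) :
    dd X Y n f ⟨m, h⟩ = X (ex (T := T) (n+1) m f) + Y (ex (T := T) (n+1) (m+1) f)
      + Y (X (ex (T := T) (n+1) (m+2) f)) + Y (X (Y (ex (T := T) (n+1) (m+3) f))) := by
  simp [dd, hm]

lemma dd_1 {n m : ℕ} (h : V n m) (hm : m % 4 = 1) (f : J (n+1) → N) :
    dd X Y n f ⟨m, h⟩ = Y (ex (T := T) (n+1) (m+1) f) := by
  simp [dd, hm]

lemma dd_2 {n m : ℕ} (h : V n m) (hm : m % 4 = 2) (f : J (n+1) → N) :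
    dd X Y n f ⟨m, h⟩ = Y (X (ex (T := T) (n+1) (m+1) f)) := by
  simp [dd, hm]

lemma dd_3 {n m : ℕ} (h : V n m) (hm : m % 4 = 3) (f : J (n+1) → N) :
    dd X Y n f ⟨m, h⟩ = X (ex (T := T) (n+1) m f) + Y (X (Y (ex (T := T) (n+1) (m+1) f))) := by
  simp [dd, hm]

/-- evaluate `ex` at an explicit position -/
lemma V_iff (n m : ℕ) : V n m ↔ m ≤ n ∧ (m % 4 = 0 ∨ m % 4 = 3 ∨ m = n) := Iff.rfl

lemma dd_comp (h2 : ∀ a : N, a + a = 0) (hX : ∀ a, X (X a) = 0)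
    (hY : ∀ a, Y (Y a) = X (Y (X a))) (n : ℕ) (f : J (n+2) → N) :
    dd X Y n (dd X Y (n+1) f) = 0 := by
  have h4 : ∀ a, Y (X (Y (X a))) = X (Y (X (Y a))) := fun a => by rw [← hY, ← hY]
  have h5 : ∀ a, X (Y (Y a)) = 0 := fun a => by rw [hY, hX]
  have h6 : ∀ a, Y (Y (X a)) = 0 := fun a => by rw [hY, hX]; simp
  ext ⟨m, hm⟩
  have hm' := hm
  rw [V_iff] at hm'
  obtain ⟨hmn, hc⟩ := hm'
  have hmod : m % 4 = 0 ∨ m % 4 = 1 ∨ m % 4 = 2 ∨ m % 4 = 3 := by omega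
  rcases hmod with h | h | h | h
  · rw [dd_0 hm h]
    have v0 : V (n+1) m := by rw [V_iff]; omega
    rw [ex_of v0, dd_0 v0 h]
    have v1' : ¬ V (n+2) (m+1) := by rw [V_iff]; omega
    rw [ex_not v1']
    rcases (show n = m ∨ n = m + 1 ∨ m + 2 ≤ n by omega) with h' | h' | h'
    · have v1 : V (n+1) (m+1) := by rw [V_iff]; omega
      have v2 : ¬ V (n+1) (m+2) := by rw [V_iff]; omega
      have v3 : ¬ V (n+1) (m+3) := by rw [V_iff]; omega
      have v3' : ¬ V (n+2) (m+3) := by rw [V_iff]; omega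
      rw [ex_of v1, ex_not v2, ex_not v3, dd_1 v1 (by omega), ex_not v3']
      simp [hX, hY, h2]
    · have v1 : ¬ V (n+1) (m+1) := by rw [V_iff]; omega
      have v2 : V (n+1) (m+2) := by rw [V_iff]; omega
      have v3 : ¬ V (n+1) (m+3) := by rw [V_iff]; omega
      have v3' : ¬ V (n+2) (m+2) := by rw [V_iff]; omega
      rw [ex_not v1, ex_of v2, ex_not v3, dd_2 v2 (by omega), ex_not v3']
      simp [hX, h4, h2]
    · have v1 : ¬ V (n+1) (m+1) := by rw [V_iff]; omega
      have v2 : ¬ V (n+1) (m+2) := by rw [V_iff]; omega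
      have v3 : V (n+1) (m+3) := by rw [V_iff]; omega
      have v3' : ¬ V (n+2) (m+2) := by rw [V_iff]; omega
      rw [ex_not v1, ex_not v2, ex_of v3, dd_3 v3 (by omega), ex_not v3']
      simp [hX, h4, h2, h5]
  · have v1 : V (n+1) (m+1) := by rw [V_iff]; omega
    rw [dd_1 hm h, ex_of v1, dd_2 v1 (by omega)]
    simp [h6]
  · have v1 : V (n+1) (m+1) := by rw [V_iff]; omega
    rw [dd_2 hm h, ex_of v1, dd_3 v1 (by omega)]
    simp [hX, h4, h5]
  · have v0 : V (n+1) m := by rw [V_iff]; omega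
    have v1 : V (n+1) (m+1) := by rw [V_iff]; omega
    rw [dd_3 hm h, ex_of v0, ex_of v1, dd_3 v0 h, dd_0 v1 (by omega)]
    simp [hX, h4, h5, h6, h2]

/-- Functoriality in the coefficients (along additive maps, possibly over different rings). -/
lemma dd_nat {T' : Type} [Ring T'] {N' : Type} [AddCommGroup N'] [Module T' N']
    {X' Y' : N' →ₗ[T'] N'} (φ : N →+ N') (hX : ∀ a, φ (X a) = X' (φ a))
    (hY : ∀ a, φ (Y a) = Y' (φ a)) (n : ℕ) (f : J (n+1) → N) (j : J n) :
    φ (dd X Y n f j) = dd X' Y' n (fun i => φ (f i)) j := by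
  have hex : ∀ m, φ (ex (T := T) (n+1) m f) = ex (T := T') (n+1) m (fun i => φ (f i)) := by
    intro m
    by_cases h : V (n+1) m
    · rw [ex_of h, ex_of h]
    · rw [ex_not h, ex_not h, map_zero]
  simp only [dd, LinearMap.pi_apply]
  split_ifs <;> simp [hX, hY, hex]

/-- Data of a contracting homotopy. -/
structure HData (X Y : N →ₗ[T] N) where
  S : N →ₗ[T] N
  e : N →ₗ[T] N
  t : N →ₗ[T] N
  b : N →ₗ[T] N
  c : N →ₗ[T] N
  XS : ∀ a, X (S a) + S (X a) = a
  eX : ∀ a, e (X a) = 0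
  tX : ∀ a, t (X a) = 0
  e1 : ∀ a, X (S a) + Y (t a) + e (Y (X (Y a))) = a
  SW : ∀ a, S (Y (X (Y a))) + Y (X (Y (S a))) = 0
  s1 : ∀ a, Y (b a) + t (Y a) = a
  s1' : ∀ a, Y (X (b a)) + S (Y a) = 0
  s2 : ∀ a, Y (X (c a)) + b (Y a) = a
  s2' : ∀ a, Y (X (Y (c a))) + S (Y (X a)) = 0
  s3 : ∀ a, X (S a) + Y (X (Y (e a))) + c (Y (X a)) = a

/-- The homotopy. -/
def hh (H : HData X Y) (n : ℕ) : (J n → N) →ₗ[T] (J (n + 1) → N) :=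
  LinearMap.pi fun j =>
    if j.1 % 4 = 0 then
      (if j.1 = n + 1 then H.e ∘ₗ ex n n else H.S ∘ₗ ex n j.1)
    else if j.1 % 4 = 1 then H.t ∘ₗ ex n n
    else if j.1 % 4 = 2 then H.b ∘ₗ ex n n
    else (if j.1 = n + 1 then H.c ∘ₗ ex n n else H.S ∘ₗ ex n j.1)

lemma hh_0 (H : HData X Y) {n m : ℕ} (h : V (n+1) m) (hm : m % 4 = 0) (hn : m ≤ n)
    (f : J n → N) : hh H n f ⟨m, h⟩ = H.S (ex (T := T) n m f) := by
  have : m ≠ n + 1 := by omega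
  simp [hh, hm, this]
lemma hh_0' (H : HData X Y) {n m : ℕ} (h : V (n+1) m) (hm : m % 4 = 0) (hn : m = n + 1)
    (f : J n → N) : hh H n f ⟨m, h⟩ = H.e (ex (T := T) n n f) := by
  subst hn; simp [hh, hm]
lemma hh_1 (H : HData X Y) {n m : ℕ} (h : V (n+1) m) (hm : m % 4 = 1)
    (f : J n → N) : hh H n f ⟨m, h⟩ = H.t (ex (T := T) n n f) := by
  simp [hh, hm]
lemma hh_2 (H : HData X Y) {n m : ℕ} (h : V (n+1) m) (hm : m % 4 = 2)
    (f : J n → N) : hh H n f ⟨m, h⟩ = H.b (ex (T := T) n n f) := by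
  simp [hh, hm]
lemma hh_3 (H : HData X Y) {n m : ℕ} (h : V (n+1) m) (hm : m % 4 = 3) (hn : m ≤ n)
    (f : J n → N) : hh H n f ⟨m, h⟩ = H.S (ex (T := T) n m f) := by
  have : m ≠ n + 1 := by omega
  simp [hh, hm, this]
lemma hh_3' (H : HData X Y) {n m : ℕ} (h : V (n+1) m) (hm : m % 4 = 3) (hn : m = n + 1)
    (f : J n → N) : hh H n f ⟨m, h⟩ = H.c (ex (T := T) n n f) := by
  subst hn; simp [hh, hm]

lemma homotopy (H : HData X Y) (n : ℕ) (f : J (n+1) → N) :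
    dd X Y (n+1) (hh H (n+1) f) + hh H n (dd X Y n f) = f := by
  ext ⟨m, hm⟩
  have hm' := hm
  rw [V_iff] at hm'
  obtain ⟨hmn, hc⟩ := hm'
  have hmod : m % 4 = 0 ∨ m % 4 = 1 ∨ m % 4 = 2 ∨ m % 4 = 3 := by omega
  rw [Pi.add_apply]
  rcases hmod with h | h | h | h
  · rw [dd_0 hm h]
    have v0 : V (n+2) m := by rw [V_iff]; omega
    rw [ex_of v0, hh_0 H v0 h (by omega), ex_of hm]
    rcases (show m = n + 1 ∨ m ≤ n by omega) with hn | hn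
    · subst hn
      have v1 : V (n+2) (n+1+1) := by rw [V_iff]; omega
      have v2 : ¬ V (n+2) (n+1+2) := by rw [V_iff]; omega
      have v3 : ¬ V (n+2) (n+1+3) := by rw [V_iff]; omega
      have w : V n n := by rw [V_iff]; omega
      rw [ex_of v1, ex_not v2, ex_not v3, hh_1 H v1 (by omega), hh_0' H hm h rfl, ex_of hm,
        ex_of w, dd_3 w (by omega), ex_of hm]
      simp [H.eX, H.e1]
    · have w : V n m := by rw [V_iff]; omega
      have v1 : ¬ V (n+2) (m+1) := by rw [V_iff]; omega
      rw [hh_0 H hm h hn, ex_of w, dd_0 w h, ex_not v1, ex_of hm]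
      rcases (show n = m ∨ n = m + 1 ∨ m + 2 ≤ n by omega) with h' | h' | h'
      · subst h'
        have v2 : V (n+2) (n+2) := by rw [V_iff]; omega
        have v3 : ¬ V (n+2) (n+3) := by rw [V_iff]; omega
        have w1 : V (n+1) (n+1) := by rw [V_iff]; omega
        have w2 : ¬ V (n+1) (n+2) := by rw [V_iff]; omega
        have w3 : ¬ V (n+1) (n+3) := by rw [V_iff]; omega
        rw [ex_of v2, ex_not v3, hh_2 H v2 (by omega), ex_of w1, ex_not w2, ex_not w3]
        have := H.XS (f ⟨n, hm⟩)
        have := H.s1' (f ⟨n+1, w1⟩)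
        simp only [map_add, map_zero]
        grind
      · subst h'
        have v2 : ¬ V (m+1+2) (m+2) := by rw [V_iff]; omega
        have v3 : V (m+1+2) (m+3) := by rw [V_iff]; omega
        have w1 : ¬ V (m+1+1) (m+1) := by rw [V_iff]; omega
        have w2 : V (m+1+1) (m+2) := by rw [V_iff]; omega
        have w3 : ¬ V (m+1+1) (m+3) := by rw [V_iff]; omega
        rw [ex_not v2, ex_of v3, hh_3' H v3 (by omega) (by omega), ex_not w1, ex_of w2, ex_not w3]
        have := H.XS (f ⟨m, hm⟩)
        have := H.s2' (f ⟨m+2, w2⟩)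
        simp only [map_add, map_zero]
        grind
      · have v2 : ¬ V (n+2) (m+2) := by rw [V_iff]; omega
        have v3 : V (n+2) (m+3) := by rw [V_iff]; omega
        have w1 : ¬ V (n+1) (m+1) := by rw [V_iff]; omega
        have w2 : ¬ V (n+1) (m+2) := by rw [V_iff]; omega
        have w3 : V (n+1) (m+3) := by rw [V_iff]; omega
        rw [ex_not v2, ex_of v3, hh_3 H v3 (by omega) (by omega), ex_not w1, ex_not w2, ex_of w3]
        have := H.XS (f ⟨m, hm⟩)
        have := H.SW (f ⟨m+3, w3⟩)
        simp only [map_add, map_zero]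
        grind
  · obtain rfl : m = n + 1 := by omega
    have v1 : V (n+2) (n+1+1) := by rw [V_iff]; omega
    have w : V n n := by rw [V_iff]; omega
    have w2 : ¬ V (n+1) (n+2) := by rw [V_iff]; omega
    have w3 : ¬ V (n+1) (n+3) := by rw [V_iff]; omega
    rw [dd_1 hm h, ex_of v1, hh_2 H v1 (by omega), hh_1 H hm h, ex_of hm, ex_of w,
      dd_0 w (by omega), ex_of hm, ex_not w2, ex_not w3]
    simp [H.tX, H.s1]
  · obtain rfl : m = n + 1 := by omega
    have v1 : V (n+2) (n+1+1) := by rw [V_iff]; omega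
    have w : V n n := by rw [V_iff]; omega
    rw [dd_2 hm h, ex_of v1, hh_3' H v1 (by omega) (by omega), hh_2 H hm h, ex_of hm, ex_of w,
      dd_1 w (by omega), ex_of hm]
    simp [H.s2]
  · have v0 : V (n+2) m := by rw [V_iff]; omega
    rw [dd_3 hm h, ex_of v0, hh_3 H v0 h (by omega), ex_of hm]
    have v1 : V (n+2) (m+1) := by rw [V_iff]; omega
    rw [ex_of v1]
    rcases (show m = n + 1 ∨ m ≤ n by omega) with hn | hn
    · subst hn
      have w : V n n := by rw [V_iff]; omega
      rw [hh_0' H v1 (by omega) rfl, hh_3' H hm h rfl, ex_of w, dd_2 w (by omega), ex_of hm]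
      simp [H.s3]
    · have w : V n m := by rw [V_iff]; omega
      have w1 : V (n+1) (m+1) := by rw [V_iff]; omega
      rw [hh_0 H v1 (by omega) (by omega), hh_3 H hm h hn, ex_of w1, ex_of w, dd_3 w h, ex_of hm,
        ex_of w1]
      have := H.XS (f ⟨m, hm⟩)
      have := H.SW (f ⟨m+1, w1⟩)
      simp only [map_add]
      grind

lemma homotopy0 (H : HData X Y) (f : J 0 → N) (j : J 0) :
    dd X Y 0 (hh H 0 f) j = X (H.S (f j)) + Y (H.t (f j)) := by
  obtain ⟨m, hm⟩ := j
  have := hm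
  rw [V_iff] at this
  obtain rfl : m = 0 := by omega
  have v0 : V 1 0 := by rw [V_iff]; omega
  have v1 : V 1 1 := by rw [V_iff]; omega
  have v2 : ¬ V 1 2 := by rw [V_iff]; omega
  have v3 : ¬ V 1 3 := by rw [V_iff]; omega
  rw [dd_0 hm rfl]
  simp only [zero_add]
  rw [ex_of v0, ex_of v1, ex_not v2, ex_not v3,
    hh_0 H v0 rfl le_rfl, hh_1 H v1 rfl, ex_of hm]
  simp

end Generic

end HA1
open CategoryTheory
namespace HA1
section Gen
variable {T : Type} [Ring T] (M : ℕ → Type) [∀ n, AddCommGroup (M n)] [∀ n, Module T (M n)]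
  (d : ∀ n, M (n+1) →ₗ[T] M n) (hd : ∀ n f, d n (d (n+1) f) = 0)

/-- chain complex from explicit linear maps -/
noncomputable def mkC : ChainComplex (ModuleCat T) ℕ :=
  ChainComplex.of (fun n => ModuleCat.of T (M n)) (fun n => ModuleCat.ofHom (d n))
    (fun n => ModuleCat.hom_ext (LinearMap.ext (hd n)))

lemma mkC_d (n : ℕ) : (mkC M d hd).d (n+1) n = ModuleCat.ofHom (d n) :=
  ChainComplex.of_d (fun n => ModuleCat.of T (M n)) (fun n => ModuleCat.ofHom (d n)) n

lemma mkC_exact (n : ℕ) (h : ∀ f, d n f = 0 → ∃ g, d (n+1) g = f) :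
    (mkC M d hd).ExactAt (n+1) := by
  rw [HomologicalComplex.exactAt_iff' _ (n + 1 + 1) (n + 1) n (by simp) (by simp)]
  rw [ShortComplex.moduleCat_exact_iff]
  intro x hx
  have e1 := mkC_d M d hd n
  have e2 := mkC_d M d hd (n+1)
  obtain ⟨g, hg⟩ := h x (by
    have : (mkC M d hd).d (n+1) n x = 0 := hx
    rw [e1] at this
    exact this)
  refine ⟨g, ?_⟩
  show (mkC M d hd).d (n+1+1) (n+1) g = x
  rw [e2]
  exact hg

variable {N : Type} [AddCommGroup N] [Module T N] (ε : M 0 →ₗ[T] N) (hs : Function.Surjective ε)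
  (h0 : ∀ f, ε (d 0 f) = 0) (h1 : ∀ f, ε f = 0 → ∃ g, d 0 g = f)
  (h2 : ∀ n f, d n f = 0 → ∃ g, d (n+1) g = f)

/-- augmentation -/
noncomputable def mkπ : mkC M d hd ⟶ (ChainComplex.single₀ (ModuleCat T)).obj (ModuleCat.of T N) :=
  (ChainComplex.toSingle₀Equiv _ _).symm ⟨ModuleCat.ofHom ε, by
    rw [mkC_d]; exact ModuleCat.hom_ext (LinearMap.ext h0)⟩

include hs h1 h2 in
lemma mkπ_quasi : QuasiIso (mkπ M d hd ε h0) := ⟨fun n => by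
    cases n
    · rw [ChainComplex.quasiIsoAt₀_iff, ShortComplex.quasiIso_iff_of_zeros']
      · have e1 := mkC_d M d hd 0
        have e2 : (mkπ M d hd ε h0).f 0 = ModuleCat.ofHom ε :=
          ChainComplex.toSingle₀Equiv_symm_apply_f_zero _ _
        constructor
        · rw [ShortComplex.moduleCat_exact_iff]
          intro x hx
          have hx' : (mkπ M d hd ε h0).f 0 x = 0 := hx
          rw [e2] at hx'
          obtain ⟨g, hg⟩ := h1 x hx'
          refine ⟨g, ?_⟩
          show (mkC M d hd).d 1 0 g = x
          rw [e1]
          exact hg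
        · show Epi ((mkπ M d hd ε h0).f 0)
          rw [e2]
          exact (ModuleCat.epi_iff_surjective _).2 hs
      · exact (mkC M d hd).shape _ _ (by simp)
      · rfl
      · rfl
    · rw [quasiIsoAt_iff_exactAt']
      · exact mkC_exact M d hd _ (h2 _)
      · apply ChainComplex.exactAt_succ_single_obj⟩

/-- the resolution -/
noncomputable def mkRes (hp : ∀ n, Module.Projective T (M n)) :
    ProjectiveResolution (ModuleCat.of T N) where
  complex := mkC M d hd
  projective n := (IsProjective.iff_projective (R := T) (M n)).1 (hp n)
  π := mkπ M d hd ε h0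
  quasiIso := mkπ_quasi M d hd ε hs h0 h1 h2

end Gen

section Hom
variable {k : Type} [Field k]

open Module in
lemma finrank_sc (S : ShortComplex (ModuleCat k)) [Module.Finite k S.X₂] :
    finrank k S.homology + finrank k (LinearMap.range S.f.hom) + finrank k (LinearMap.range S.g.hom)
      = finrank k S.X₂ := by
  have e := S.moduleCatHomologyIso.toLinearEquiv.finrank_eq
  have h1 : finrank k S.homology = finrank k (LinearMap.ker S.g.hom ⧸
    LinearMap.range S.moduleCatToCycles) := e
  have h2 := Submodule.finrank_quotient_add_finrank (LinearMap.range S.moduleCatToCycles)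
  have h3 : finrank k (LinearMap.range S.moduleCatToCycles) = finrank k (LinearMap.range S.f.hom) := by
    have : LinearMap.range S.f.hom =
        (LinearMap.range S.moduleCatToCycles).map (LinearMap.ker S.g.hom).subtype := by
      rw [← LinearMap.range_comp]; rfl
    rw [this]
    exact (Submodule.equivMapOfInjective _ (Submodule.injective_subtype _) _).finrank_eq
  have h4 := S.g.hom.finrank_range_add_finrank_ker
  omega

end Hom
end HA1
open CategoryTheory
namespace HA1
section Hom2
variable {k : Type} [Field k] (C : ChainComplex (ModuleCat k) ℕ)
  {M : ℕ → Type} [∀ n, AddCommGroup (M n)] [∀ n, Module k (M n)] [∀ n, Module.Finite k (M n)]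
  (d : ∀ n, M (n+1) →ₗ[k] M n) (e : ∀ n, C.X n ≃ₗ[k] M n)
  (he : ∀ n x, e n (C.d (n+1) n x) = d n (e (n+1) x))

open Module

include he in
lemma rank_d (n : ℕ) : finrank k (LinearMap.range (C.d (n+1) n).hom) =
    finrank k (LinearMap.range (d n)) := by
  have : LinearMap.range (d n) = (LinearMap.range (C.d (n+1) n).hom).map (e n).toLinearMap := by
    ext y
    constructor
    · rintro ⟨x, rfl⟩
      exact ⟨_, ⟨(e (n+1)).symm x, rfl⟩, by
        refine (he n _).trans ?_
        rw [LinearEquiv.apply_symm_apply]⟩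
    · rintro ⟨_, ⟨x, rfl⟩, rfl⟩
      exact ⟨e (n+1) x, (he n x).symm⟩
  rw [this]
  exact (Submodule.equivMapOfInjective _ (e n).injective _).finrank_eq

include he in
lemma finrank_hom_zero : finrank k (C.homology 0) + finrank k (LinearMap.range (d 0)) =
    finrank k (M 0) := by
  have i := ShortComplex.homologyMapIso (C.isoSc' 1 0 0 (by simp) (by simp))
  have e1 : finrank k (C.homology 0) = finrank k (C.sc' 1 0 0).homology :=
    i.toLinearEquiv.finrank_eq
  haveI : Module.Finite k (C.X 0) := Module.Finite.equiv (e 0).symm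
  haveI : Module.Finite k (C.sc' 1 0 0).X₂ := this
  have h := finrank_sc (C.sc' 1 0 0)
  have h1 : finrank k (LinearMap.range (C.sc' 1 0 0).f.hom) = finrank k (LinearMap.range (d 0)) :=
    rank_d C d e he 0
  have h2 : (C.sc' 1 0 0).g = 0 := C.shape _ _ (by simp)
  have h3 : finrank k (LinearMap.range (C.sc' 1 0 0).g.hom) = 0 := by
    rw [h2]
    have : LinearMap.range (0 : (C.sc' 1 0 0).X₂ ⟶ (C.sc' 1 0 0).X₃).hom = ⊥ := LinearMap.range_zero
    rw [this]; simp
  have h4 : finrank k (C.sc' 1 0 0).X₂ = finrank k (M 0) := (e 0).finrank_eq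
  omega

include he in
lemma finrank_hom_succ (n : ℕ) : finrank k (C.homology (n+1)) +
    finrank k (LinearMap.range (d (n+1))) + finrank k (LinearMap.range (d n)) =
    finrank k (M (n+1)) := by
  have i := ShortComplex.homologyMapIso (C.isoSc' (n+1+1) (n+1) n (by simp) (by simp))
  have e1 : finrank k (C.homology (n+1)) = finrank k (C.sc' (n+1+1) (n+1) n).homology :=
    i.toLinearEquiv.finrank_eq
  haveI : Module.Finite k (C.X (n+1)) := Module.Finite.equiv (e (n+1)).symm
  haveI : Module.Finite k (C.sc' (n+1+1) (n+1) n).X₂ := this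
  have h := finrank_sc (C.sc' (n+1+1) (n+1) n)
  have h1 : finrank k (LinearMap.range (C.sc' (n+1+1) (n+1) n).f.hom) =
      finrank k (LinearMap.range (d (n+1))) := rank_d C d e he (n+1)
  have h2 : finrank k (LinearMap.range (C.sc' (n+1+1) (n+1) n).g.hom) =
      finrank k (LinearMap.range (d n)) := rank_d C d e he n
  have h4 : finrank k (C.sc' (n+1+1) (n+1) n).X₂ = finrank k (M (n+1)) := (e (n+1)).finrank_eq
  omega
end Hom2
end HA1
namespace HA1
section Dim
variable {k : Type} [Field k] {N : Type} [AddCommGroup N] [Module k N] [Module.Finite k N]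
open Module

lemma V4 {n m : ℕ} (h : V n m) : V (n+4) (m+4) := by rw [V_iff] at *; omega
lemma V40 (n : ℕ) : V (n+4) 0 := by rw [V_iff]; omega
lemma V43 (n : ℕ) : V (n+4) 3 := by rw [V_iff]; omega

/-- splitting off two columns -/
noncomputable def spl (n : ℕ) : (J (n+4) → N) ≃ₗ[k] (N × N) × (J n → N) where
  toFun f := ((f ⟨0, V40 n⟩, f ⟨3, V43 n⟩), fun j => f ⟨j.1 + 4, V4 j.2⟩)
  map_add' _ _ := rfl
  map_smul' _ _ := rfl
  invFun g := fun j => if h : V n (j.1 - 4) ∧ 4 ≤ j.1 then g.2 ⟨j.1 - 4, h.1⟩ else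
    if j.1 = 0 then g.1.1 else g.1.2
  left_inv f := by
    ext ⟨m, hm⟩
    by_cases h : 4 ≤ m
    · have h1 : V n (m - 4) := by rw [V_iff] at *; omega
      have h2 : m - 4 + 4 = m := by omega
      simp [h, h1, h2]
    · have h1 : m = 0 ∨ m = 3 := by rw [V_iff] at *; omega
      obtain rfl | rfl := h1 <;> simp
  right_inv g := by
    refine Prod.ext (Prod.ext ?_ ?_) ?_
    · simp
    · simp
    · ext ⟨m, hm⟩
      simp [hm]

lemma V30 : V 3 0 := by rw [V_iff]; omega
lemma V33 : V 3 3 := by rw [V_iff]; omega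

/-- degree three -/
noncomputable def spl3 : (J 3 → N) ≃ₗ[k] (N × N) where
  toFun f := (f ⟨0, V30⟩, f ⟨3, V33⟩)
  map_add' _ _ := rfl
  map_smul' _ _ := rfl
  invFun g := fun j => if j.1 = 0 then g.1 else g.2
  left_inv f := by
    ext ⟨m, hm⟩
    have h1 : m = 0 ∨ m = 3 := by rw [V_iff] at *; omega
    obtain rfl | rfl := h1 <;> simp
  right_inv g := by simp

variable {X Y : N →ₗ[k] N} (hYX : ∀ a, Y (X a) = 0)

include hYX in
lemma ddshift (n : ℕ) (f : J (n+1+4) → N) :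
    spl (k := k) n (dd X Y (n+4) f) =
      ((X.prodMap X).prodMap (dd X Y n)) (spl (k := k) (n+1) f) := by
  refine Prod.ext (Prod.ext ?_ ?_) ?_
  · show dd X Y (n+4) f ⟨0, V40 n⟩ = X (f ⟨0, V40 (n+1)⟩)
    rw [dd_0 _ rfl, ex_of (V40 (n+1)), ex_not (m := 0 + 1)]
    · simp [hYX]
    · rw [V_iff]; omega
  · show dd X Y (n+4) f ⟨3, V43 n⟩ = X (f ⟨3, V43 (n+1)⟩)
    rw [dd_3 _ rfl, ex_of (V43 (n+1))]
    simp [hYX]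
  · ext ⟨m, hm⟩
    show dd X Y (n+4) f ⟨m+4, V4 hm⟩ = dd X Y n (spl (k := k) (n+1) f).2 ⟨m, hm⟩
    have key : ∀ i, ex (T := k) (n+4+1) (i+4) f = ex (T := k) (n+1) i (spl (k := k) (n+1) f).2 := by
      intro i
      by_cases hi : V (n+1) i
      · rw [ex_of hi, ex_of (V4 hi)]; rfl
      · rw [ex_not hi, ex_not]
        rw [V_iff] at *; omega
    have h4 : m % 4 = 0 ∨ m % 4 = 1 ∨ m % 4 = 2 ∨ m % 4 = 3 := by omega
    rcases h4 with h | h | h | h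
    · rw [dd_0 _ h, dd_0 _ (by omega)]
      simp only [← key]
    · rw [dd_1 _ h, dd_1 _ (by omega)]
      simp only [← key]
    · rw [dd_2 _ h, dd_2 _ (by omega)]
      simp only [← key]
    · rw [dd_3 _ h, dd_3 _ (by omega)]
      simp only [← key]

include hYX in
lemma ddshift3 (f : J (0+4) → N) :
    spl3 (k := k) (dd X Y 3 f) = (X.prodMap X) (spl (k := k) 0 f).1 := by
  refine Prod.ext ?_ ?_
  · show dd X Y 3 f ⟨0, V30⟩ = X (f ⟨0, V40 0⟩)
    rw [dd_0 _ rfl, ex_of (V40 0), ex_not (m := 0 + 1)]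
    · simp [hYX]
    · rw [V_iff]; omega
  · show dd X Y 3 f ⟨3, V33⟩ = X (f ⟨3, V43 0⟩)
    rw [dd_3 _ rfl, ex_of (V43 0)]
    simp [hYX]

lemma rank_conj {M M' P P' : Type} [AddCommGroup M] [Module k M] [AddCommGroup M'] [Module k M']
    [AddCommGroup P] [Module k P] [AddCommGroup P'] [Module k P']
    (a : M →ₗ[k] P) (b : M' →ₗ[k] P') (e : M → M') (hs : Function.Surjective e) (e' : P ≃ₗ[k] P')
    (h : ∀ x, e' (a x) = b (e x)) :
    finrank k (LinearMap.range a) = finrank k (LinearMap.range b) := by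
  have : LinearMap.range b = (LinearMap.range a).map e'.toLinearMap := by
    ext y
    constructor
    · rintro ⟨x, rfl⟩
      obtain ⟨x, rfl⟩ := hs x
      exact ⟨_, ⟨x, rfl⟩, h x⟩
    · rintro ⟨_, ⟨x, rfl⟩, rfl⟩
      exact ⟨e x, (h x).symm⟩
  rw [this]
  exact (Submodule.equivMapOfInjective _ e'.injective _).finrank_eq

lemma rank_prodMap {M M' P P' : Type} [AddCommGroup M] [Module k M] [AddCommGroup M'] [Module k M']
    [AddCommGroup P] [Module k P] [AddCommGroup P'] [Module k P'] [Module.Finite k P]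
    [Module.Finite k P'] (a : M →ₗ[k] P) (b : M' →ₗ[k] P') :
    finrank k (LinearMap.range (a.prodMap b)) =
      finrank k (LinearMap.range a) + finrank k (LinearMap.range b) := by
  rw [← Module.finrank_prod]
  have e : LinearMap.range (a.prodMap b) = LinearMap.range
      ((LinearMap.range a).subtype.prodMap (LinearMap.range b).subtype) := by
    rw [LinearMap.range_prodMap, LinearMap.range_prodMap]; simp
  rw [e]
  refine LinearMap.finrank_range_of_inj ?_
  exact Function.Injective.prodMap (Submodule.injective_subtype _) (Submodule.injective_subtype _)

include hYX in
lemma rank_shift (n : ℕ) : finrank k (LinearMap.range (dd X Y (n+4))) =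
    finrank k (LinearMap.range (dd X Y n)) + 2 * finrank k (LinearMap.range X) := by
  rw [rank_conj (dd X Y (n+4)) ((X.prodMap X).prodMap (dd X Y n)) (spl (k := k) (n+1))
    (spl (k := k) (n+1)).surjective (spl (k := k) n) (ddshift hYX n), rank_prodMap, rank_prodMap]
  ring

include hYX in
lemma rank_three : finrank k (LinearMap.range (dd X Y 3)) = 2 * finrank k (LinearMap.range X) := by
  rw [rank_conj (dd X Y 3) (X.prodMap X) (fun f => (spl (k := k) 0 f).1)
    (Prod.fst_surjective.comp (spl (k := k) 0).surjective) (spl3 (k := k)) (ddshift3 hYX),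
    rank_prodMap]
  ring

lemma finrank_shift (n : ℕ) : finrank k (J (n+4) → N) = finrank k (J n → N) + 2 * finrank k N := by
  rw [(spl (k := k) (N := N) n).finrank_eq, Module.finrank_prod, Module.finrank_prod]
  ring

end Dim
end HA1
open TensorProduct MulOpposite CategoryTheory
namespace HA1

abbrev B8 := Fin 8 → ZMod 2

/-- right multiplication by `x` -/
def rX : B8 →ₗ[ZMod 2] B8 where
  toFun v := ![0, v 0, 0, 0, v 2, v 3, 0, v 6]
  map_add' u v := by ext i; fin_cases i <;> simp
  map_smul' u v := by ext i; fin_cases i <;> simp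
def rY : B8 →ₗ[ZMod 2] B8 where
  toFun v := ![0, 0, v 0, v 1, 0, v 2, v 4, v 5]
  map_add' u v := by ext i; fin_cases i <;> simp
  map_smul' u v := by ext i; fin_cases i <;> simp
def lX : B8 →ₗ[ZMod 2] B8 where
  toFun v := ![0, v 0, 0, v 2, 0, v 4, 0, v 6]
  map_add' u v := by ext i; fin_cases i <;> simp
  map_smul' u v := by ext i; fin_cases i <;> simp
def lY : B8 →ₗ[ZMod 2] B8 where
  toFun v := ![0, 0, v 0, 0, v 1, v 2, v 3, v 5]
  map_add' u v := by ext i; fin_cases i <;> simp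
  map_smul' u v := by ext i; fin_cases i <;> simp
def oS : B8 →ₗ[ZMod 2] B8 where
  toFun v := ![v 1, 0, v 4, v 5, 0, 0, v 7, 0]
  map_add' u v := by ext i; fin_cases i <;> simp
  map_smul' u v := by ext i; fin_cases i <;> simp
def oe : B8 →ₗ[ZMod 2] B8 where
  toFun v := ![v 6, 0, 0, 0, 0, 0, 0, 0]
  map_add' u v := by ext i; fin_cases i <;> simp
  map_smul' u v := by ext i; fin_cases i <;> simp
def ot : B8 →ₗ[ZMod 2] B8 where
  toFun v := ![v 2, v 3, 0, 0, v 6, 0, 0, 0]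
  map_add' u v := by ext i; fin_cases i <;> simp
  map_smul' u v := by ext i; fin_cases i <;> simp
def ob : B8 →ₗ[ZMod 2] B8 where
  toFun v := ![v 2, v 3, v 5, 0, v 6, v 7, 0, 0]
  map_add' u v := by ext i; fin_cases i <;> simp
  map_smul' u v := by ext i; fin_cases i <;> simp
def oc : B8 →ₗ[ZMod 2] B8 where
  toFun v := ![v 3, 0, v 6, v 7, 0, 0, 0, 0]
  map_add' u v := by ext i; fin_cases i <;> simp
  map_smul' u v := by ext i; fin_cases i <;> simp

lemma z2 (a : ZMod 2) : a + a = 0 := CharTwo.add_self_eq_zero a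

/-- the contracting homotopy data on `A(1)` -/
def hdata : HData rX rY where
  S := oS
  e := oe
  t := ot
  b := ob
  c := oc
  XS a := by ext i; fin_cases i <;> simp [rX, rY, oS, oe, ot, ob, oc, z2]
  eX a := by ext i; fin_cases i <;> simp [rX, rY, oS, oe, ot, ob, oc, z2]
  tX a := by ext i; fin_cases i <;> simp [rX, rY, oS, oe, ot, ob, oc, z2]
  e1 a := by ext i; fin_cases i <;> simp [rX, rY, oS, oe, ot, ob, oc, z2]
  SW a := by ext i; fin_cases i <;> simp [rX, rY, oS, oe, ot, ob, oc, z2]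
  s1 a := by ext i; fin_cases i <;> simp [rX, rY, oS, oe, ot, ob, oc, z2]
  s1' a := by ext i; fin_cases i <;> simp [rX, rY, oS, oe, ot, ob, oc, z2]
  s2 a := by ext i; fin_cases i <;> simp [rX, rY, oS, oe, ot, ob, oc, z2]
  s2' a := by ext i; fin_cases i <;> simp [rX, rY, oS, oe, ot, ob, oc, z2]
  s3 a := by ext i; fin_cases i <;> simp [rX, rY, oS, oe, ot, ob, oc, z2]

lemma hdata_eps (a : B8) (h : a 0 = 0) : rX (hdata.S a) + rY (hdata.t a) = a := by
  ext i; fin_cases i <;> simp [hdata, rX, rY, oS, ot, h]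

lemma two_zero {M : Type} [AddCommGroup M] [Module (ZMod 2) M] (a : M) : a + a = 0 := by
  rw [← two_smul (ZMod 2) a]
  have : (2 : ZMod 2) = 0 := rfl
  rw [this, zero_smul]

section Words
variable {R : Type} [Ring R] [Algebra (ZMod 2) R] {x y : R}

/-- linear combination of the eight standard words -/
def psi (x y : R) : B8 →ₗ[ZMod 2] R where
  toFun v := v 0 • 1 + v 1 • x + v 2 • y + v 3 • (x * y) + v 4 • (y * x) + v 5 • (x * (y * x))
    + v 6 • (y * (x * y)) + v 7 • (x * (y * (x * y)))
  map_add' u v := by simp only [Pi.add_apply]; module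
  map_smul' u v := by simp only [Pi.smul_apply, smul_eq_mul, RingHom.id_apply]; module

lemma psi_apply (v : B8) : psi x y v = v 0 • 1 + v 1 • x + v 2 • y + v 3 • (x * y)
    + v 4 • (y * x) + v 5 • (x * (y * x))
    + v 6 • (y * (x * y)) + v 7 • (x * (y * (x * y))) := rfl

variable (hx : x * x = 0) (hy : y * y = x * (y * x))
include hx hy

lemma w1 (a : R) : x * (x * a) = 0 := by rw [← mul_assoc, hx, zero_mul]
lemma w2 (a : R) : y * (y * a) = x * (y * (x * a)) := by
  rw [← mul_assoc, hy]; simp only [mul_assoc]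
lemma w3 : y * (x * (y * x)) = x * (y * (x * y)) := by
  have h : y * (y * y) = (y * y) * y := (mul_assoc _ _ _).symm
  rw [hy] at h
  simpa only [mul_assoc] using h
lemma w4 (a : R) : y * (x * (y * (x * a))) = x * (y * (x * (y * a))) := by
  have := congrArg (· * a) (w3 hx hy)
  simpa only [mul_assoc] using this

lemma psi_rX (v : B8) : psi x y (rX v) = psi x y v * x := by
  simp [psi_apply, rX, add_mul, mul_assoc, hx, hy, w1 hx hy, w2 hx hy, w3 hx hy, w4 hx hy]
lemma psi_rY (v : B8) : psi x y (rY v) = psi x y v * y := by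
  simp [psi_apply, rY, add_mul, mul_assoc, hx, hy, w1 hx hy, w2 hx hy, w3 hx hy, w4 hx hy]
  try abel
lemma psi_lX (v : B8) : psi x y (lX v) = x * psi x y v := by
  simp [psi_apply, lX, mul_add, mul_assoc, hx, hy, w1 hx hy, w2 hx hy, w3 hx hy, w4 hx hy]
lemma psi_lY (v : B8) : psi x y (lY v) = y * psi x y v := by
  simp [psi_apply, lY, mul_add, mul_assoc, hx, hy, w1 hx hy, w2 hx hy, w3 hx hy, w4 hx hy]
  try abel

end Words

lemma Sq1_sq : Sq1 * Sq1 = 0 := by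
  have := RingQuot.mkAlgHom_rel (ZMod 2) A1Rel.sq1
  simpa [Sq1] using this

lemma Sq2_sq : Sq2 * Sq2 = Sq1 * (Sq2 * Sq1) := by
  have := RingQuot.mkAlgHom_rel (ZMod 2) A1Rel.sq2
  have h : Sq2 * Sq2 + Sq1 * Sq2 * Sq1 = 0 := by simpa [Sq1, Sq2] using this
  have h2 : Sq1 * (Sq2 * Sq1) + Sq1 * (Sq2 * Sq1) = 0 := two_zero _
  rw [mul_assoc] at h
  exact add_right_cancel (h.trans h2.symm)

/-- universal property -/
noncomputable def lift {R : Type} [Ring R] [Algebra (ZMod 2) R] (x y : R) (hx : x * x = 0)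
    (hy : y * y = x * (y * x)) : A1 →ₐ[ZMod 2] R :=
  RingQuot.liftAlgHom (ZMod 2) ⟨FreeAlgebra.lift (ZMod 2) ![x, y], by
    intro a b h
    cases h with
    | sq1 => simp [hx]
    | sq2 => simp [hy, mul_assoc]; exact two_zero (M := R) _⟩

@[simp] lemma lift_Sq1 {R : Type} [Ring R] [Algebra (ZMod 2) R] (x y : R) (hx : x * x = 0)
    (hy : y * y = x * (y * x)) : lift x y hx hy Sq1 = x := by
  simp [lift, Sq1]
@[simp] lemma lift_Sq2 {R : Type} [Ring R] [Algebra (ZMod 2) R] (x y : R) (hx : x * x = 0)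
    (hy : y * y = x * (y * x)) : lift x y hx hy Sq2 = y := by
  simp [lift, Sq2]

/-- induction: a submodule closed under left multiplications by generators containing 1 -/
lemma A1_induct (p : A1 → Prop) (h1 : p 1) (hadd : ∀ a b, p a → p b → p (a + b))
    (hs : ∀ (c : ZMod 2) a, p a → p (c • a))
    (hx : ∀ a, p a → p (Sq1 * a)) (hy : ∀ a, p a → p (Sq2 * a)) (a : A1) : p a := by
  have key : ∀ u : FreeAlgebra (ZMod 2) (Fin 2), ∀ b, p b →
      p (RingQuot.mkAlgHom (ZMod 2) A1Rel u * b) := by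
    intro u
    induction u using FreeAlgebra.induction with
    | grade0 r => intro b hb; rw [AlgHom.commutes, ← Algebra.smul_def]; exact hs _ _ hb
    | grade1 i =>
      intro b hb
      fin_cases i
      · exact hx _ hb
      · exact hy _ hb
    | mul u v hu hv => intro b hb; rw [map_mul, mul_assoc]; exact hu _ (hv _ hb)
    | add u v hu hv => intro b hb; rw [map_add, add_mul]; exact hadd _ _ (hu _ hb) (hv _ hb)
  obtain ⟨u, rfl⟩ := RingQuot.mkAlgHom_surjective (ZMod 2) A1Rel a
  simpa using key u 1 h1

lemma psi_surj : Function.Surjective (psi Sq1 Sq2) := by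
  intro a
  induction a using A1_induct with
  | h1 => exact ⟨![1,0,0,0,0,0,0,0], by simp [psi_apply]⟩
  | hadd a b ha hb => obtain ⟨u, rfl⟩ := ha; obtain ⟨v, rfl⟩ := hb; exact ⟨u + v, map_add _ _ _⟩
  | hs c a ha => obtain ⟨u, rfl⟩ := ha; exact ⟨c • u, map_smul _ _ _⟩
  | hx a ha => obtain ⟨u, rfl⟩ := ha; exact ⟨lX u, psi_lX Sq1_sq Sq2_sq u⟩
  | hy a ha => obtain ⟨u, rfl⟩ := ha; exact ⟨lY u, psi_lY Sq1_sq Sq2_sq u⟩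

/-- left regular representation -/
noncomputable def rho : A1 →ₐ[ZMod 2] Module.End (ZMod 2) B8 :=
  lift lX lY (by apply LinearMap.ext; intro v; ext i; fin_cases i <;> simp [lX])
    (by apply LinearMap.ext; intro v; ext i; fin_cases i <;> simp [lX, lY])

lemma psi_inj : Function.Injective (psi Sq1 Sq2) := by
  have : ∀ v, rho (psi Sq1 Sq2 v) ![1,0,0,0,0,0,0,0] = v := by
    intro v
    have e1 : rho Sq1 = lX := lift_Sq1 _ _ _ _
    have e2 : rho Sq2 = lY := lift_Sq2 _ _ _ _
    simp only [psi_apply, map_add, map_smul, map_mul, map_one, e1, e2]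
    ext i
    fin_cases i <;> simp [lX, lY]
  intro u v h
  rw [← this u, ← this v, h]

noncomputable def psiE : B8 ≃ₗ[ZMod 2] A1 :=
  LinearEquiv.ofBijective (psi Sq1 Sq2) ⟨psi_inj, psi_surj⟩

lemma psiE_apply (v : B8) : psiE v = psi Sq1 Sq2 v := rfl

instance : Module.Finite (ZMod 2) A1 := Module.Finite.equiv psiE
lemma finrank_A1 : Module.finrank (ZMod 2) A1 = 8 := by
  rw [← psiE.finrank_eq]; simp

end HA1
open TensorProduct MulOpposite CategoryTheory
namespace HA1

/-- Abstract algebras like `A(1)`. -/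
class A1Like (A : Type) [Ring A] [Algebra (ZMod 2) A] where
  x : A
  y : A
  hx : x * x = 0
  hy : y * y = x * (y * x)
  bij : Function.Bijective (psi x y)

section Abs

variable {A : Type} [Ring A] [Algebra (ZMod 2) A] [A1Like A]

local notation "q1" => (A1Like.x (A := A))
local notation "q2" => (A1Like.y (A := A))
local notation "SS" => (A ⊗[ZMod 2] Aᵐᵒᵖ)

lemma hhq1 : q1 * q1 = 0 := A1Like.hx
lemma hhq2 : q2 * q2 = q1 * (q2 * q1) := A1Like.hy

@[elab_as_elim]
lemma A_induct {p : A → Prop} (h1 : p 1) (hadd : ∀ a b, p a → p b → p (a + b))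
    (hs : ∀ (c : ZMod 2) a, p a → p (c • a))
    (hx : ∀ a, p a → p (q1 * a)) (hy : ∀ a, p a → p (q2 * a)) (a : A) : p a := by
  obtain ⟨v, rfl⟩ := (A1Like.bij (A := A)).2 a
  have hx1 : p q1 := by simpa using hx _ h1
  have hy1 : p q2 := by simpa using hy _ h1
  rw [psi_apply]
  refine hadd _ _ (hadd _ _ (hadd _ _ (hadd _ _ (hadd _ _ (hadd _ _ (hadd _ _ ?_ ?_) ?_) ?_) ?_)
    ?_) ?_) ?_ <;> refine hs _ _ ?_
  · exact h1
  · exact hx1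
  · exact hy1
  · exact hx _ hy1
  · exact hy _ hx1
  · exact hx _ (hy _ hx1)
  · exact hy _ (hx _ hy1)
  · exact hx _ (hy _ (hx _ hy1))

variable (A) in
noncomputable def psiAD : B8 ≃ₗ[ZMod 2] A :=
  LinearEquiv.ofBijective (psi q1 q2) A1Like.bij

local notation "psiA" => (psiAD A)

@[reducible] noncomputable def modI : Module SS A := TensorProduct.Algebra.module
attribute [local instance] modI

lemma act (a b c : A) : ((a ⊗ₜ[ZMod 2] op b : SS) • c : A) = a * c * b := by
  show a • (op b • c) = _
  simp [mul_assoc]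

variable (A) in
noncomputable def sxD : SS := q1 ⊗ₜ 1 + 1 ⊗ₜ op q1
variable (A) in
noncomputable def syD : SS := q2 ⊗ₜ 1 + q1 ⊗ₜ op q1 + 1 ⊗ₜ op q2

local notation "sx" => (sxD A)
local notation "sy" => (syD A)

lemma op1 : op q1 * op q1 = 0 := by rw [← op_mul, hhq1]; rfl
lemma op2 : op q2 * op q2 = op q1 * (op q2 * op q1) := by
  simp only [← op_mul, hhq2, mul_assoc]

lemma op1' (a : Aᵐᵒᵖ) : op q1 * (op q1 * a) = 0 := by rw [← mul_assoc, op1, zero_mul]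
lemma SS2 : (2 : SS) = 0 := (one_add_one_eq_two (R := SS)).symm.trans (two_zero _)

lemma sx_sq : sx * sx = 0 := by
  simp [sxD, add_mul, mul_add, hhq1, op1, two_zero]

lemma sy_sq : sy * sy = sx * (sy * sx) := by
  have h : sy * sy + sx * (sy * sx) = 0 := by
    simp only [sxD, syD, add_mul, mul_add, Algebra.TensorProduct.tmul_mul_tmul, mul_one, one_mul,
      mul_assoc, hhq1, hhq2, op1, op2, mul_zero, zero_mul, tmul_zero, zero_tmul,
      w1 hhq1 hhq2, op1', add_zero, zero_add]
    abel_nf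
    simp [SS2]
  exact add_right_cancel (h.trans (two_zero (sx * (sy * sx))).symm)

variable (A) in
/-- the basis of words -/
noncomputable def bwD (i : Fin 8) : A := psiA (Pi.single i 1)

local notation "bw" => (bwD A)

lemma sum_bw (c : B8) : ∑ i, c i • bw i = psiA c := by
  simp only [bwD, ← map_smul, ← map_sum]
  congr 1
  ext j
  simp [Finset.sum_apply, Pi.single_apply]

variable (A) in
/-- one free summand -/
noncomputable def GGD (b : A) : B8 →ₗ[ZMod 2] SS :=
  LinearMap.mulLeft (ZMod 2) ((1 : A) ⊗ₜ[ZMod 2] op b) ∘ₗ psi sx sy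

local notation "GG" => (GGD A)

lemma GG_apply (b : A) (v : B8) : GG b v = ((1 : A) ⊗ₜ[ZMod 2] op b) * psi sx sy v := rfl

variable (A) in
noncomputable def PhiD : (Fin 8 → B8) →ₗ[ZMod 2] SS := ∑ i, GG (bw i) ∘ₗ LinearMap.proj i

local notation "Phi" => (PhiD A)

lemma Phi_apply (v : Fin 8 → B8) : Phi v = ∑ i, GG (bw i) (v i) := by simp [PhiD]

lemma GG_mem (b : A) (v : B8) : GG b v ∈ LinearMap.range Phi := by
  obtain ⟨c, rfl⟩ := (psiAD A).surjective b
  refine ⟨fun i => c i • v, ?_⟩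
  rw [Phi_apply, ← sum_bw]
  simp only [map_smul, GG_apply, ← smul_mul_assoc, ← Finset.sum_mul, ← tmul_smul, ← op_smul,
    ← tmul_sum, Finset.op_sum]

lemma closed_of (s : SS) (h : ∀ b v, s * GG b v ∈ LinearMap.range Phi) (u : SS)
    (hu : u ∈ LinearMap.range Phi) : s * u ∈ LinearMap.range Phi := by
  obtain ⟨v, rfl⟩ := hu
  rw [Phi_apply, Finset.mul_sum]
  exact Submodule.sum_mem _ fun i _ => h _ _

lemma closed_op (d : A) : ∀ u ∈ LinearMap.range Phi,
    ((1 : A) ⊗ₜ[ZMod 2] op d : SS) * u ∈ LinearMap.range Phi := by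
  apply closed_of
  intro b v
  rw [GG_apply, ← mul_assoc, Algebra.TensorProduct.tmul_mul_tmul, ← op_mul, one_mul]
  exact GG_mem _ _

lemma comm1 (c b : A) : ((c ⊗ₜ[ZMod 2] 1 : SS)) * ((1 : A) ⊗ₜ[ZMod 2] op b) =
    ((1 : A) ⊗ₜ[ZMod 2] op b) * (c ⊗ₜ[ZMod 2] 1) := by simp

lemma closed_x : ∀ u ∈ LinearMap.range Phi,
    (q1 ⊗ₜ[ZMod 2] 1 : SS) * u ∈ LinearMap.range Phi := by
  apply closed_of
  intro b v
  have e : (q1 ⊗ₜ[ZMod 2] 1 : SS) = sx + (1 : A) ⊗ₜ[ZMod 2] op q1 := by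
    rw [sxD, add_assoc, two_zero, add_zero]
  rw [GG_apply, ← mul_assoc, comm1, mul_assoc, e, add_mul, mul_add]
  refine Submodule.add_mem _ ?_ ?_
  · rw [← psi_lX sx_sq sy_sq]; exact GG_mem _ _
  · exact closed_op _ _ (GG_mem _ _)

lemma closed_y : ∀ u ∈ LinearMap.range Phi,
    (q2 ⊗ₜ[ZMod 2] 1 : SS) * u ∈ LinearMap.range Phi := by
  apply closed_of
  intro b v
  have e : (q2 ⊗ₜ[ZMod 2] 1 : SS) = sy + ((1 : A) ⊗ₜ[ZMod 2] op q1 * (q1 ⊗ₜ[ZMod 2] 1)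
      + (1 : A) ⊗ₜ[ZMod 2] op q2) := by
    rw [Algebra.TensorProduct.tmul_mul_tmul, one_mul, mul_one, syD]
    abel_nf
    simp [SS2]
  rw [GG_apply, ← mul_assoc, comm1, mul_assoc, e, add_mul, add_mul, mul_add, mul_add]
  refine Submodule.add_mem _ ?_ (Submodule.add_mem _ ?_ ?_)
  · rw [← psi_lY sx_sq sy_sq]; exact GG_mem _ _
  · refine closed_op _ _ ?_
    rw [mul_assoc]
    refine closed_op _ _ (closed_x _ ?_)
    have := GG_mem (A := A) 1 v
    rw [GG_apply] at this
    rwa [op_one, ← Algebra.TensorProduct.one_def, one_mul] at this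
  · exact closed_op _ _ (GG_mem _ _)

lemma Phi_surj : Function.Surjective Phi := by
  intro u
  rw [← LinearMap.mem_range]
  have h1 : (1 : SS) ∈ LinearMap.range Phi := by
    have := GG_mem (A := A) 1 ![1,0,0,0,0,0,0,0]
    rw [GG_apply, op_one, ← Algebra.TensorProduct.one_def, one_mul, psi_apply] at this
    simpa using this
  have hc : ∀ c : A, (c ⊗ₜ[ZMod 2] 1 : SS) ∈ LinearMap.range Phi := by
    intro c
    induction c using A_induct with
    | h1 => exact h1
    | hadd a b ha hb => rw [add_tmul]; exact Submodule.add_mem _ ha hb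
    | hs r a ha => rw [← smul_tmul']; exact Submodule.smul_mem _ _ ha
    | hx a ha => simpa using closed_x _ ha
    | hy a ha => simpa using closed_y _ ha
  induction u using TensorProduct.induction_on with
  | zero => exact Submodule.zero_mem _
  | add a b ha hb => exact Submodule.add_mem _ ha hb
  | tmul c d =>
    have := closed_op (unop d) _ (hc c)
    simpa using this

instance fin_A : Module.Finite (ZMod 2) A := Module.Finite.equiv psiA
lemma finrank_A : Module.finrank (ZMod 2) A = 8 := by
  rw [← (psiAD A).finrank_eq]; simp

lemma Phi_bij : Function.Bijective Phi := by
  refine ⟨?_, Phi_surj⟩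
  have : Module.Finite (ZMod 2) Aᵐᵒᵖ := Module.Finite.equiv (opLinearEquiv (ZMod 2) (M := A))
  have e : Module.finrank (ZMod 2) (Fin 8 → B8) = Module.finrank (ZMod 2) SS := by
    rw [Module.finrank_tensorProduct, ← (opLinearEquiv (ZMod 2) (M := A)).finrank_eq, finrank_A (A := A), Module.finrank_pi_fintype]
    simp
  exact (LinearMap.injective_iff_surjective_of_finrank_eq_finrank e).2 Phi_surj

variable (A) in
noncomputable def PhiED : (Fin 8 → B8) ≃ₗ[ZMod 2] SS := LinearEquiv.ofBijective Phi Phi_bij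

local notation "PhiE" => (PhiED A)

lemma PhiE_apply (v) : PhiE v = ∑ i, GG (bw i) (v i) := Phi_apply v

lemma GG_X (b v) : GG b (rX v) = GG b v * sx := by
  rw [GG_apply, psi_rX sx_sq sy_sq, ← mul_assoc, ← GG_apply]
lemma GG_Y (b v) : GG b (rY v) = GG b v * sy := by
  rw [GG_apply, psi_rY sx_sq sy_sq, ← mul_assoc, ← GG_apply]

variable (A) in
/-- the coordinates -/
noncomputable def thD (i : Fin 8) : SS →ₗ[ZMod 2] B8 := LinearMap.proj i ∘ₗ (PhiED A).symm.toLinearMap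

local notation "th" => (thD A)

lemma sum_th (u : SS) : ∑ i, GG (bw i) (th i u) = u := by
  have := PhiE_apply (A := A) ((PhiED A).symm u)
  rw [(PhiED A).apply_symm_apply] at this
  exact this.symm

lemma th_X (i : Fin 8) (u : SS) : th i (u * sx) = rX (th i u) := by
  have : (PhiED A).symm (u * sx) = fun i => rX (th i u) := by
    rw [LinearEquiv.symm_apply_eq, PhiE_apply]
    simp only [GG_X, ← Finset.sum_mul, sum_th]
  exact congrFun this i
lemma th_Y (i : Fin 8) (u : SS) : th i (u * sy) = rY (th i u) := by
  have : (PhiED A).symm (u * sy) = fun i => rY (th i u) := by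
    rw [LinearEquiv.symm_apply_eq, PhiE_apply]
    simp only [GG_Y, ← Finset.sum_mul, sum_th]
  exact congrFun this i

/-- right multiplication by `s`, `SS`-linear -/
noncomputable def rm (s : SS) : SS →ₗ[SS] SS := LinearMap.toSpanSingleton SS SS s
lemma rm_apply (s u : SS) : rm s u = u * s := rfl

/-- lifting boundaries coordinatewise -/
lemma lift_bdry (n : ℕ) (f : J n → SS) (g : Fin 8 → J (n+1) → B8)
    (hg : ∀ i, dd rX rY n (g i) = fun j => th i (f j)) :
    dd (rm sx) (rm sy) n (∑ i, fun j => GG (bw i) (g i j)) = f := by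
  rw [map_sum]
  ext j
  rw [Finset.sum_apply]
  rw [← sum_th (f j)]
  refine Finset.sum_congr rfl fun i _ => ?_
  rw [← congrFun (hg i) j]
  exact (dd_nat (X := rX) (Y := rY) (X' := rm sx) (Y' := rm sy) (GG (bw i)).toAddMonoidHom
    (fun a => GG_X _ _) (fun a => GG_Y _ _) n (g i) j).symm

lemma exact_succ (n : ℕ) (f : J (n+1) → SS) (hf : dd (rm sx) (rm sy) n f = 0) :
    ∃ g, dd (rm sx) (rm sy) (n+1) g = f := by
  refine ⟨_, lift_bdry (n+1) f (fun i => hh hdata (n+1) (fun j => th i (f j))) fun i => ?_⟩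
  have h := homotopy hdata n (fun j => th i (f j))
  have h0 : dd rX rY n (fun j => th i (f j)) = 0 := by
    ext1 j
    have := dd_nat (X := rm sx) (Y := rm sy) (X' := rX) (Y' := rY) (th i).toAddMonoidHom
      (fun a => th_X _ _) (fun a => th_Y _ _) n f j
    rw [hf] at this
    simpa using this.symm
  rw [h0, map_zero, add_zero] at h
  exact h

lemma sx_one : (sx • (1 : A) : A) = 0 := by
  rw [sxD, add_smul, ← op_one, act, act]; simp [two_zero]
lemma sy_one : (sy • (1 : A) : A) = 0 := by
  rw [syD, add_smul, add_smul, ← op_one, act, act, act]; simp [hhq1, two_zero]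

lemma smul_one_k (r : ZMod 2) (u : SS) (a : A) : (r • u) • a = r • (u • a) := by
  induction u using TensorProduct.induction_on with
  | zero =>
    have h0 : (0 : SS) • a = 0 := Module.zero_smul a
    have h1 : r • (0 : SS) = 0 := smul_zero r
    show (r • (0 : SS)) • a = r • ((0 : SS) • a)
    rw [h1, h0, smul_zero]
  | add p q hp hq => rw [smul_add, add_smul, hp, hq, add_smul, smul_add]
  | tmul p q => rw [smul_tmul', ← op_unop q, act, act]; simp

lemma GG_one (b : A) (v : B8) : (GG b v • (1 : A) : A) = v 0 • b := by
  have : (psi sx sy v • (1 : A) : A) = v 0 • 1 := by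
    simp only [psi_apply, add_smul, smul_one_k, mul_smul, sx_one, sy_one, smul_zero, add_zero,
      one_smul]
  rw [GG_apply, mul_smul, this, act]; simp

lemma exact_zero (f : J 0 → SS) (hf : ∀ j, (f j • (1 : A) : A) = 0) :
    ∃ g, dd (rm sx) (rm sy) 0 g = f := by
  refine ⟨_, lift_bdry 0 f (fun i => hh hdata 0 (fun j => th i (f j))) fun i => ?_⟩
  ext1 j
  rw [homotopy0]
  apply hdata_eps
  have h := hf j
  rw [← sum_th (f j), Finset.sum_smul] at h
  simp only [GG_one] at h
  rw [sum_bw (fun i => th i (f j) 0)] at h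
  have := (LinearEquiv.map_eq_zero_iff _).1 h
  exact congrFun this i

end Abs

end HA1
open TensorProduct MulOpposite CategoryTheory
namespace HA1

section CoinvGen
variable {k : Type} [CommRing k] {S : Type} [Ring S] [Algebra k S] {P : Set (S × S)}
  {N : ModuleCat S} {B : Type} [AddCommGroup B] [Module k B]

/-- computing coinvariants -/
noncomputable def coinvMap (φ : (ModuleCat.restrictScalars (algebraMap k S)).obj N →ₗ[k] B)
    (h1 : ∀ p ∈ P, ∀ n : N, φ (p.1 • n - p.2 • n : N) = 0) :
    (coinvFunctor k S P).obj N →ₗ[k] B :=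
  Submodule.liftQ (relSub k S P N) φ (by
    rw [relSub, Submodule.span_le]
    rintro x ⟨p, hp, n, rfl⟩
    exact h1 p hp n)

lemma coinvMap_bij (φ : (ModuleCat.restrictScalars (algebraMap k S)).obj N →ₗ[k] B)
    (h1 : ∀ p ∈ P, ∀ n : N, φ (p.1 • n - p.2 • n : N) = 0)
    (σ : B → (ModuleCat.restrictScalars (algebraMap k S)).obj N) (hσ : ∀ b, φ (σ b) = b)
    (h : ∀ n : (ModuleCat.restrictScalars (algebraMap k S)).obj N,
      ∃ r ∈ relSub k S P N, n = r + σ (φ n)) (hσ0 : σ 0 = 0) :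
    Function.Bijective (coinvMap (P := P) φ h1) := by
  constructor
  · rw [injective_iff_map_eq_zero]
    intro x hx
    obtain ⟨n, rfl⟩ := Submodule.mkQ_surjective _ x
    have hn : φ n = 0 := hx
    obtain ⟨r, hr, e⟩ := h n
    rw [hn, hσ0, add_zero] at e
    rw [e]
    exact (Submodule.Quotient.mk_eq_zero _).2 hr
  · intro b
    exact ⟨Submodule.mkQ _ (σ b), hσ b⟩

end CoinvGen

section Abs

variable {A : Type} [Ring A] [Algebra (ZMod 2) A] [A1Like A]

local notation "q1" => (A1Like.x (A := A))
local notation "q2" => (A1Like.y (A := A))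
local notation "SS" => (A ⊗[ZMod 2] Aᵐᵒᵖ)
local notation "sx" => (sxD A)
local notation "sy" => (syD A)

variable (A) in
/-- the relations for coinvariants -/
abbrev PPD : Set (SS × SS) :=
  {p | ∃ a : A, p = (a ⊗ₜ[ZMod 2] (1 : Aᵐᵒᵖ), (1 : A) ⊗ₜ[ZMod 2] op a)}
local notation "PP" => (PPD A)

variable (A) in
/-- the twisted multiplication -/
noncomputable def mu : SS →ₗ[ZMod 2] A :=
  TensorProduct.lift (LinearMap.mk₂ (ZMod 2) (fun (a : A) (b : Aᵐᵒᵖ) => unop b * a)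
    (by intros; simp [mul_add]) (by intros; simp) (by intros; simp [add_mul]) (by intros; simp))

lemma mu_tmul (a : A) (b : Aᵐᵒᵖ) : mu A (a ⊗ₜ b) = unop b * a := rfl

lemma mu_rel (a : A) (u : SS) : mu A ((a ⊗ₜ[ZMod 2] (1 : Aᵐᵒᵖ)) * u) =
    mu A (((1 : A) ⊗ₜ[ZMod 2] op a) * u) := by
  induction u using TensorProduct.induction_on with
  | zero => rw [mul_zero, mul_zero]
  | add p q hp hq => rw [mul_add, mul_add, map_add, map_add, hp, hq]
  | tmul c d =>
    rw [Algebra.TensorProduct.tmul_mul_tmul, Algebra.TensorProduct.tmul_mul_tmul, mu_tmul, mu_tmul]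
    simp [mul_assoc]

variable (A) in
/-- the induced operator of `sx` -/
noncomputable def aX : A →ₗ[ZMod 2] A :=
  LinearMap.mulLeft (ZMod 2) q1 + LinearMap.mulRight (ZMod 2) q1
variable (A) in
/-- the induced operator of `sy` -/
noncomputable def aY : A →ₗ[ZMod 2] A :=
  LinearMap.mulLeft (ZMod 2) q2 + LinearMap.mulLeft (ZMod 2) q1 ∘ₗ LinearMap.mulRight (ZMod 2) q1
    + LinearMap.mulRight (ZMod 2) q2

lemma mu_X (u : SS) : mu A (u * sx) = aX A (mu A u) := by
  induction u using TensorProduct.induction_on with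
  | zero => rw [zero_mul, map_zero, map_zero]
  | add p q hp hq => rw [add_mul, map_add, map_add, map_add, hp, hq]
  | tmul c d =>
    rw [sxD, mul_add, Algebra.TensorProduct.tmul_mul_tmul, Algebra.TensorProduct.tmul_mul_tmul,
      map_add, mu_tmul, mu_tmul, mu_tmul]
    simp [mul_assoc, aX, add_comm]

lemma mu_Y (u : SS) : mu A (u * sy) = aY A (mu A u) := by
  induction u using TensorProduct.induction_on with
  | zero => rw [zero_mul, map_zero, map_zero]
  | add p q hp hq => rw [add_mul, map_add, map_add, map_add, hp, hq]
  | tmul c d =>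
    rw [syD, mul_add, mul_add, Algebra.TensorProduct.tmul_mul_tmul,
      Algebra.TensorProduct.tmul_mul_tmul, Algebra.TensorProduct.tmul_mul_tmul,
      map_add, map_add, mu_tmul, mu_tmul, mu_tmul, mu_tmul]
    simp only [mul_assoc, aX, aY, LinearMap.add_apply, LinearMap.comp_apply, 
      LinearMap.mulLeft_apply, LinearMap.mulRight_apply, unop_mul, unop_op, mul_one, one_mul]
    abel

variable (A) in
/-- the free modules of the resolution -/
abbrev FM (n : ℕ) : ModuleCat SS := ModuleCat.of SS (J n → SS)

variable (A) in
/-- the coordinate map on coinvariants -/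
noncomputable def phiN (n : ℕ) :
    (ModuleCat.restrictScalars (algebraMap (ZMod 2) SS)).obj (FM A n) →ₗ[ZMod 2] (J n → A) where
  toFun f := fun j => mu A ((show J n → SS from f) j)
  map_add' f g := by
    ext j
    exact map_add (mu A) _ _
  map_smul' r f := by
    ext j
    show mu A (algebraMap (ZMod 2) SS r * (show J n → SS from f) j) = 
      r • mu A ((show J n → SS from f) j)
    rw [← Algebra.smul_def, map_smul]

lemma phiN_rel (n : ℕ) : ∀ p ∈ PP, ∀ m : FM A n, phiN A n (p.1 • m - p.2 • m : FM A n) = 0 := by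
  rintro _ ⟨a, rfl⟩ m
  ext j
  show mu A ((a ⊗ₜ[ZMod 2] (1 : Aᵐᵒᵖ)) * (show J n → SS from m) j -
     ((1 : A) ⊗ₜ[ZMod 2] op a) * (show J n → SS from m) j) = 0
  rw [map_sub, mu_rel, sub_self]

variable (A) in
/-- section -/
def sig (n : ℕ) (b : J n → A) :
    (ModuleCat.restrictScalars (algebraMap (ZMod 2) SS)).obj (FM A n) :=
  (fun j => (1 : A) ⊗ₜ[ZMod 2] op (b j) : J n → SS)

lemma single_mem (n : ℕ) (j : J n) (u : SS) :
    ∃ r ∈ relSub (ZMod 2) SS PP (FM A n),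
      (show J n → SS from r) = Pi.single j (u - (1 : A) ⊗ₜ[ZMod 2] op (mu A u)) := by
  induction u using TensorProduct.induction_on with
  | zero => 
    refine ⟨0, Submodule.zero_mem _, ?_⟩
    rw [map_zero, MulOpposite.op_zero, tmul_zero, sub_zero]
    exact (Pi.single_zero j).symm
  | add p q hp hq =>
    obtain ⟨r, hr, e⟩ := hp
    obtain ⟨s, hs, e'⟩ := hq
    refine ⟨r + s, Submodule.add_mem _ hr hs, ?_⟩
    rw [map_add, MulOpposite.op_add, tmul_add, add_sub_add_comm, Pi.single_add, ← e, ← e']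
    rfl
  | tmul c d =>
    refine ⟨_, Submodule.subset_span ⟨_, ⟨c, rfl⟩, (Pi.single j ((1 : A) ⊗ₜ[ZMod 2] d) : J n → SS),
      rfl⟩, ?_⟩
    show (c ⊗ₜ[ZMod 2] (1 : Aᵐᵒᵖ)) • (Pi.single j ((1 : A) ⊗ₜ[ZMod 2] d) : J n → SS) -
      ((1 : A) ⊗ₜ[ZMod 2] op c) • (Pi.single j ((1 : A) ⊗ₜ[ZMod 2] d) : J n → SS) = _
    funext i
    by_cases h : i = j
    · subst h
      rw [Pi.sub_apply, Pi.smul_apply, Pi.smul_apply, Pi.single_eq_same, Pi.single_eq_same,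
        smul_eq_mul, smul_eq_mul]
      simp [mu_tmul]
    · rw [Pi.sub_apply, Pi.smul_apply, Pi.smul_apply, Pi.single_eq_of_ne h, Pi.single_eq_of_ne h]
      simp

lemma phi_sec (n : ℕ) (f : (ModuleCat.restrictScalars (algebraMap (ZMod 2) SS)).obj (FM A n)) :
    ∃ r ∈ relSub (ZMod 2) SS PP (FM A n), f = r + sig A n (phiN A n f) := by
  classical
  have := Fintype.ofFinite (J n)
  let f' : J n → SS := f
  choose r hr hr' using fun j => single_mem (A := A) n j (f' j)
  refine ⟨∑ j, r j, Submodule.sum_mem _ fun j _ => hr j, ?_⟩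
  have e1 : f' = ∑ j, (Pi.single j (f' j - (1 : A) ⊗ₜ[ZMod 2] op (mu A (f' j))) : J n → SS)
      + fun j => (1 : A) ⊗ₜ[ZMod 2] op (mu A (f' j)) := by
    rw [Finset.univ_sum_single]
    ext j
    simp
  simp only [← hr'] at e1
  exact e1

lemma coinv_bij (n : ℕ) : Function.Bijective (coinvMap (P := PP) (phiN A n) (phiN_rel n)) := by
  refine coinvMap_bij _ _ (sig A n) ?_ (phi_sec n) ?_
  · intro b
    ext j
    show mu A ((1 : A) ⊗ₜ[ZMod 2] op (b j)) = _
    simp [mu_tmul]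
  · refine funext (f := (sig A n 0 : J n → SS)) (g := fun _ => 0) fun j => ?_
    show (1 : A) ⊗ₜ[ZMod 2] op (0 : A) = 0
    simp

end Abs
end HA1
open TensorProduct MulOpposite CategoryTheory
namespace HA1

/-- `aX` in coordinates -/
def bX : B8 →ₗ[ZMod 2] B8 := lX + rX
/-- `aY` in coordinates -/
def bY : B8 →ₗ[ZMod 2] B8 := lY + lX ∘ₗ rX + rY

lemma bYX (v : B8) : bY (bX v) = 0 := by
  ext i; fin_cases i <;> simp [bX, bY, lX, lY, rX, rY, z2]

/-- half of `bX` -/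
def bp : B8 →ₗ[ZMod 2] (Fin 2 → ZMod 2) where
  toFun v := ![v 2, v 4 + v 3]
  map_add' u v := by ext i; fin_cases i <;> simp; abel
  map_smul' u v := by ext i; fin_cases i <;> simp [mul_add]
/-- other half of `bX` -/
def bi : (Fin 2 → ZMod 2) →ₗ[ZMod 2] B8 where
  toFun v := ![0, 0, 0, v 0, v 0, v 1, 0, 0]
  map_add' u v := by ext i; fin_cases i <;> simp
  map_smul' u v := by ext i; fin_cases i <;> simp

lemma rank_bX : Module.finrank (ZMod 2) (LinearMap.range bX) = 2 := by
  have e : bX = bi ∘ₗ bp := by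
    refine LinearMap.ext fun v => ?_
    ext j
    fin_cases j <;> simp [bX, lX, rX, bi, bp, z2]
  have hs : LinearMap.range bp = ⊤ := by
    rw [LinearMap.range_eq_top]
    intro w
    refine ⟨![0, 0, w 0, w 1, 0, 0, 0, 0], ?_⟩
    ext i; fin_cases i <;> simp [bp]
  have hi : Function.Injective bi := by
    intro u v h
    ext i; fin_cases i
    · simpa [bi] using congrFun h 3
    · simpa [bi] using congrFun h 5
  rw [e, LinearMap.range_comp, hs, ← LinearMap.range_eq_map, LinearMap.finrank_range_of_inj hi]
  simp

lemma arith (H r K : ℕ → ℕ) (h0 : H 0 + r 0 = K 0) (hs : ∀ n, H (n+1) + r (n+1) + r n = K (n+1))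
    (r3 : r 3 = 2 * 2) (rs : ∀ n, r (n+4) = r n + 2 * 2) (fs : ∀ n, K (n+4) = K n + 2 * 8) (n : ℕ) :
    H (n+4) = H n + 8 := by
  cases n with
  | zero =>
    have a1 := hs 3
    have a2 := rs 0
    have a3 := fs 0
    simp only [zero_add, Nat.reduceAdd] at *
    omega
  | succ m =>
    have a1 := hs (m + 4)
    have a2 := rs m
    have a3 := rs (m+1)
    have a4 := fs (m+1)
    have a5 := hs m
    have e : m + 4 + 1 = m + 1 + 4 := by omega
    rw [e] at a1
    omega

section Abs

variable {A : Type} [Ring A] [Algebra (ZMod 2) A] [A1Like A]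

local notation "SS" => (A ⊗[ZMod 2] Aᵐᵒᵖ)
local notation "sx" => (sxD A)
local notation "sy" => (syD A)
local notation "PP" => (PPD A)
attribute [local instance] modI

lemma psi_bX (v : B8) : psiAD A (bX v) = aX A (psiAD A v) := by
  show psi _ _ (lX v + rX v) = _
  rw [map_add, psi_lX A1Like.hx A1Like.hy, psi_rX A1Like.hx A1Like.hy]
  rfl

lemma psi_bY (v : B8) : psiAD A (bY v) = aY A (psiAD A v) := by
  show psi _ _ (lY v + lX (rX v) + rY v) = _
  rw [map_add, map_add, psi_lX A1Like.hx A1Like.hy, psi_rX A1Like.hx A1Like.hy,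
    psi_lY A1Like.hx A1Like.hy, psi_rY A1Like.hx A1Like.hy]
  rfl

lemma aYX (a : A) : aY A (aX A a) = 0 := by
  obtain ⟨v, rfl⟩ := (psiAD A).surjective a
  rw [← psi_bX, ← psi_bY, bYX, map_zero]

lemma rank_aX : Module.finrank (ZMod 2) (LinearMap.range (aX A)) = 2 := by
  exact (rank_conj bX (aX A) (psiAD A) (psiAD A).surjective (psiAD A) psi_bX).symm.trans rank_bX

lemma dR (n : ℕ) (f : J (n+1+1) → SS) :
    dd (rm sx) (rm sy) n (dd (rm sx) (rm sy) (n+1) f) = 0 := by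
  refine dd_comp (fun a => two_zero a) (fun a => ?_) (fun a => ?_) n f
  · rw [rm_apply, rm_apply, mul_assoc, sx_sq, mul_zero]
  · simp only [rm_apply, mul_assoc, sy_sq]

lemma V00 : V 0 0 := by rw [V_iff]; omega

variable (A) in
/-- augmentation -/
noncomputable def epsA : (J 0 → SS) →ₗ[SS] A :=
  (LinearMap.toSpanSingleton SS A 1) ∘ₗ LinearMap.proj ⟨0, V00⟩

lemma epsA_apply (f : J 0 → SS) : epsA A f = f ⟨0, V00⟩ • (1 : A) := rfl

lemma eps_surj : Function.Surjective (epsA A) := by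
  intro a
  refine ⟨fun _ => a ⊗ₜ 1, ?_⟩
  rw [epsA_apply, ← op_one, act]
  simp

lemma eps_d (f : J (0+1) → SS) : epsA A (dd (rm sx) (rm sy) 0 f) = 0 := by
  rw [epsA_apply, dd_0 _ rfl]
  simp only [rm_apply, add_smul, mul_smul, sx_one, sy_one, smul_zero, add_zero]

lemma eps_exact (f : J 0 → SS) (h : epsA A f = 0) : ∃ g, dd (rm sx) (rm sy) 0 g = f := by
  refine exact_zero f ?_
  rintro ⟨j, hj⟩
  obtain rfl : j = 0 := by rw [V_iff] at hj; omega
  exact h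

variable (A) in
/-- the resolution -/
noncomputable def resA : ProjectiveResolution (ModuleCat.of SS A) :=
  mkRes (fun n => J n → SS) (fun n => dd (rm sx) (rm sy) n) dR (epsA A) eps_surj eps_d eps_exact
    exact_succ (fun n => inferInstance)

variable (A) in
/-- the complex of coinvariants -/
noncomputable def cxA : ChainComplex (ModuleCat (ZMod 2)) ℕ :=
  ((coinvFunctor (ZMod 2) SS PP).mapHomologicalComplex _).obj (resA A).complex

variable (A) in
/-- identification of its terms -/
noncomputable def eqA (n : ℕ) : (cxA A).X n ≃ₗ[ZMod 2] (J n → A) :=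
  LinearEquiv.ofBijective (coinvMap (P := PP) (phiN A n) (phiN_rel n)) (coinv_bij n)

lemma eqA_d (n : ℕ) (x) : eqA A n ((cxA A).d (n+1) n x) = dd (aX A) (aY A) n (eqA A (n+1) x) := by
  obtain ⟨f, rfl⟩ := Submodule.mkQ_surjective (relSub (ZMod 2) SS PP (FM A (n+1))) x
  have e : (cxA A).d (n+1) n = (coinvFunctor (ZMod 2) SS PP).map
      (ModuleCat.ofHom (dd (rm sx) (rm sy) n)) := by
    rw [← mkC_d (fun n => J n → SS) (fun n => dd (rm sx) (rm sy) n) dR n]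
    rfl
  rw [e]
  ext j
  exact dd_nat (X := rm sx) (Y := rm sy) (X' := aX A) (Y' := aY A) (mu A).toAddMonoidHom
    (fun a => mu_X a) (fun a => mu_Y a) n f j

lemma HH_cx (n : ℕ) : Module.finrank (ZMod 2) (HochschildHomology (ZMod 2) A n) =
    Module.finrank (ZMod 2) ((cxA A).homology n) :=
  ((resA A).isoLeftDerivedObj (coinvFunctor (ZMod 2) SS PP) n).toLinearEquiv.finrank_eq

lemma main (n : ℕ) : Module.finrank (ZMod 2) (HochschildHomology (ZMod 2) A (n+4)) =
    Module.finrank (ZMod 2) (HochschildHomology (ZMod 2) A n) + 8 := by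
  rw [HH_cx, HH_cx]
  have h0 := finrank_hom_zero (cxA A) (dd (aX A) (aY A)) (eqA A) eqA_d
  have hs := finrank_hom_succ (cxA A) (dd (aX A) (aY A)) (eqA A) eqA_d
  have r3 := rank_three (aYX (A := A))
  have rs := rank_shift (aYX (A := A))
  have fs := finrank_shift (k := ZMod 2) (N := A)
  have hA := finrank_A (A := A)
  have hX := rank_aX (A := A)
  refine arith (fun n => Module.finrank (ZMod 2) ((cxA A).homology n))
    (fun n => Module.finrank (ZMod 2) (LinearMap.range (dd (aX A) (aY A) n)))
    (fun n => Module.finrank (ZMod 2) (J n → A)) h0 hs ?_ ?_ ?_ n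
  · rw [hX] at r3; exact r3
  · intro n; have := rs n; rw [hX] at this; exact this
  · intro n; have := fs n; rw [hA] at this; exact this

end Abs

noncomputable instance : A1Like A1 := ⟨Sq1, Sq2, Sq1_sq, Sq2_sq, ⟨psi_inj, psi_surj⟩⟩

end HA1

theorem hochschildHomology_A1_periodicity (n : ℕ) :
    Module.finrank (ZMod 2) (HochschildHomology (ZMod 2) A1 (n + 4)) =
      Module.finrank (ZMod 2) (HochschildHomology (ZMod 2) A1 n) + 8 := by
  exact HA1.main n
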